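/- For every finite connected simple graph Γ with m vertices there exist a finite tree T with |V(T)| ≤ 2^(2^((m−1)²)) and a quasi-isometric group embedding of G(Γ) into G(T) with respect to the word metrics. -/

import Mathlib

/-!
The tree is the tree `pathTree Γ` of simple paths of `Γ`, rooted at the empty path, in which a path
is joined to its one-vertex extensions. The homomorphism `pathHom Γ` sends a vertex `v` to the
product of its lifts, i.e. of the paths that end at `v`. Lifts of non-adjacent vertices are
non-adjacent, so this is well defined. It suffices to show that `pathHom Γ` does not decrease norms
(`raagNorm_le_pathHom`): injectivity follows, and the opposite inequality up to a constant is
automatic (`isQIEmbedding_of_norm_le`).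

For a vertex `r` of a graph `X`, the group `G(X)` maps to an HNN extension with stable letter `r`
centralizing the subgroup generated by the other vertices not adjacent to `r`. By Britton's lemma, a
product `g₀ r^{±1} g₁ ⋯ r^{±1} gₙ` with `gᵢ` in the subgroup generated by the vertices other than
`r`, and without pinches, cannot be written with fewer than `n` letters `r` (`length_le_countP`).

The main point (`countP_le_countP`) is that if `π = (v₀, …, vₖ)` is a simple path and `w` is a
reduced word avoiding `v₀, …, vₖ₋₁`, then any word for the image of `w` contains `π` at least as
often as `w` contains `vₖ`. Otherwise the image of `w` has a pinch at `π`, coming from a subword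
`vₖ^{±1} u vₖ^{∓1}` of `w` in which `u` avoids `v₀, …, vₖ` and the image of `u` lies in the subgroup
generated by vertices not adjacent to `π`. As `w` is reduced, `u` contains a letter `t` adjacent to
`vₖ`. Now `(v₀, …, vₖ, t)` is a simple path adjacent to `π`, and by induction on the number of
vertices outside the path it occurs in every word for the image of `u`, a contradiction. The case
`k = 0`, summed over all vertices `v₀`, gives the norm inequality.

The tree has at most `(m + 1) ^ m` vertices, which is within the required bound for `m ≥ 3`; a
connected graph on at most two vertices is itself a tree.
-/


/-! Right-angled Artin groups in the "opposite" convention: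
generators are vertices, and two generators commute iff the vertices are NOT adjacent. -/

/-- The commutation relators for the right-angled Artin group (opposite convention):
one commutator for each pair of distinct non-adjacent vertices. -/
def raagRels {V : Type*} (Γ : SimpleGraph V) : Set (FreeGroup V) :=
  {r | ∃ u v : V, u ≠ v ∧ ¬ Γ.Adj u v ∧
    r = FreeGroup.of u * FreeGroup.of v * (FreeGroup.of u)⁻¹ * (FreeGroup.of v)⁻¹}

/-- The right-angled Artin group `G(Γ)` (opposite convention). -/
abbrev Raag {V : Type*} (Γ : SimpleGraph V) : Type _ := PresentedGroup (raagRels Γ)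

/-- The vertex generators of `G(Γ)`. -/
abbrev Raag.of {V : Type*} (Γ : SimpleGraph V) (v : V) : Raag Γ := PresentedGroup.of v

/-- The element of `G(Γ)` represented by a word: a list of letters, where the letter `(v, b)`
stands for `v` if `b = true` and for `v⁻¹` if `b = false`. -/
def wordProd {V : Type*} (Γ : SimpleGraph V) (w : List (V × Bool)) : Raag Γ :=
  (w.map fun l => if l.2 then Raag.of Γ l.1 else (Raag.of Γ l.1)⁻¹).prod

/-- A word is reduced if no shorter word represents the same element of `G(Γ)`. -/
def IsReducedWord {V : Type*} (Γ : SimpleGraph V) (w : List (V × Bool)) : Prop :=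
  ∀ w' : List (V × Bool), wordProd Γ w' = wordProd Γ w → w.length ≤ w'.length

/-- The word length of `g` with respect to a generating set `S` of a group:
the least length of a list of elements of `S ∪ S⁻¹` whose product is `g`. -/
noncomputable def wordLength {G : Type*} [Group G] (S : Set G) (g : G) : ℕ :=
  sInf {n | ∃ l : List G, (∀ x ∈ l, x ∈ S ∨ x⁻¹ ∈ S) ∧ l.prod = g ∧ l.length = n}

/-- The (right-invariant) word metric associated to a generating set. -/
noncomputable def wordDist {G : Type*} [Group G] (S : Set G) (x y : G) : ℝ :=
  (wordLength S (y * x⁻¹) : ℝ)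

/-- Word length in `G(Γ)` with respect to the vertex generating set. -/
noncomputable def raagNorm {V : Type*} (Γ : SimpleGraph V) (g : Raag Γ) : ℕ :=
  wordLength (Set.range (Raag.of Γ)) g

/-- The word metric on `G(Γ)` with respect to the vertex generating set. -/
noncomputable def raagDist {V : Type*} (Γ : SimpleGraph V) (x y : Raag Γ) : ℝ :=
  wordDist (Set.range (Raag.of Γ)) x y

/-- A quasi-isometric group embedding: an injective group homomorphism which
is a quasi-isometric embedding with respect to the given metrics. -/
def IsQIEmbedding {G H : Type*} [Group G] [Group H] (f : G →* H)
    (dG : G → G → ℝ) (dH : H → H → ℝ) : Prop :=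
  Function.Injective f ∧ ∃ C : ℝ, 1 ≤ C ∧ ∀ x y : G,
    dG x y / C - C ≤ dH (f x) (f y) ∧ dH (f x) (f y) ≤ C * dG x y + C

/-- The support of `g ∈ G(Γ)`: vertices occurring in some reduced word representing `g`. -/
def raagSupp {V : Type*} (Γ : SimpleGraph V) (g : Raag Γ) : Set V :=
  {v | ∃ w : List (V × Bool), IsReducedWord Γ w ∧ wordProd Γ w = g ∧ ∃ b, (v, b) ∈ w}

/-- A cancellation of the vertex `v` in the word `w`: a subword `v^{±1} w' v^{∓1}` where the
support of the element represented by `w'` is disjoint from the link of `v`. -/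
def HasCancellationOf {V : Type*} (Γ : SimpleGraph V) (w : List (V × Bool)) (v : V) : Prop :=
  ∃ (w₁ w' w₂ : List (V × Bool)) (b : Bool),
    w = w₁ ++ (v, b) :: (w' ++ (v, !b) :: w₂) ∧
    ∀ u ∈ raagSupp Γ (wordProd Γ w'), ¬ Γ.Adj v u

/-- An innermost cancellation of the vertex `v` in the word `w`: a cancellation
`v^{±1} w' v^{∓1}` in which moreover no letter of `w'` involves `v`. -/
def HasInnermostCancellationOf {V : Type*} (Γ : SimpleGraph V) (w : List (V × Bool)) (v : V) :
    Prop :=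
  ∃ (w₁ w' w₂ : List (V × Bool)) (b : Bool),
    w = w₁ ++ (v, b) :: (w' ++ (v, !b) :: w₂) ∧
    (∀ u ∈ raagSupp Γ (wordProd Γ w'), ¬ Γ.Adj v u) ∧
    ∀ b' : Bool, (v, b') ∉ w'

/-- A covering of simple graphs: a graph homomorphism which is bijective on neighbor sets. -/
structure IsGraphCovering {V' V : Type*} (Γ' : SimpleGraph V') (Γ : SimpleGraph V)
    (p : V' → V) : Prop where
  adj : ∀ {x y : V'}, Γ'.Adj x y → Γ.Adj (p x) (p y)
  bijOn : ∀ x : V', Set.BijOn p (Γ'.neighborSet x) (Γ.neighborSet (p x))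

/-- A universal cover of a connected graph `Γ`: a covering whose total graph is a tree. -/
def IsUniversalCover {V' V : Type*} (Γ' : SimpleGraph V') (Γ : SimpleGraph V)
    (p : V' → V) : Prop :=
  IsGraphCovering Γ' Γ p ∧ Γ'.IsTree

section Phi

variable {V' V : Type*} [LinearOrder V'] [DecidableEq V]

/-- The lifts in `T` of a vertex `v`, listed in increasing order. -/
def liftVerts (p : V' → V) (T : Finset V') (v : V) : List V' :=
  (T.filter fun t => p t = v).sort (· ≤ ·)

/-- The lifts in `T` of a vertex `v`, in increasing order, as vertices of the induced subgraph. -/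
def liftSubVerts (p : V' → V) (T : Finset V') (v : V) : List (↥(T : Set V')) :=
  (liftVerts p T v).pmap (fun t ht => (⟨t, ht⟩ : ↥(T : Set V')))
    (fun t ht => by
      have : t ∈ T := (Finset.mem_filter.mp ((Finset.mem_sort _).mp ht)).1
      exact Finset.mem_coe.mpr this)

/-- `φ(Γ,T)` sends each vertex `v` of `Γ` to the product, in increasing order,
of the lifts of `v` lying in `T`.  This predicate singles out the homomorphism `φ(Γ,T)`. -/
def IsPhi (Γ : SimpleGraph V) (Γ' : SimpleGraph V') (p : V' → V) (T : Finset V')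
    (φ : Raag Γ →* Raag (Γ'.induce (T : Set V'))) : Prop :=
  ∀ v : V, φ (Raag.of Γ v) =
    ((liftSubVerts p T v).map (Raag.of (Γ'.induce (T : Set V')))).prod

/-- The `φ(Γ,T)`-homomorphic word of a word `w`: each letter `x^{e}` of `w` is replaced by the
word `(t₁ t₂ ⋯ t_k)^{e}` where `t₁ < t₂ < ⋯ < t_k` are the lifts of `x` lying in `T`. -/
def homWord (p : V' → V) (T : Finset V') (w : List (V × Bool)) :
    List (↥(T : Set V') × Bool) :=
  w.flatMap fun l =>
    if l.2 then (liftSubVerts p T l.1).map (fun t => (t, true))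
    else ((liftSubVerts p T l.1).reverse).map (fun t => (t, false))

/-- `φ(Γ,T)` is `F`-surviving: for every reduced word `w` in `G(Γ)` and every `v ∈ F`, the
`φ(Γ,T)`-homomorphic word of `w` has no cancellation of `v`. -/
def IsSurviving (Γ : SimpleGraph V) (Γ' : SimpleGraph V') (p : V' → V) (T : Finset V')
    (F : Set V') : Prop :=
  ∀ w : List (V × Bool), IsReducedWord Γ w →
    ∀ (v : V') (hv : v ∈ (T : Set V')), v ∈ F →
      ¬ HasCancellationOf (Γ'.induce (T : Set V')) (homWord p T w) ⟨v, hv⟩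

end Phi

/-! ### Words, norms and reduced words -/

theorem exists_list_of_mem_closure {G : Type*} [Group G] {S : Set G} {g : G}
    (hg : g ∈ Subgroup.closure S) : ∃ l : List G, (∀ x ∈ l, x ∈ S ∨ x⁻¹ ∈ S) ∧ l.prod = g := by
  rw [← Subgroup.mem_toSubmonoid, Subgroup.closure_toSubmonoid] at hg
  exact Submonoid.exists_list_of_mem_closure hg

theorem wordProd_nil {X : Type*} (Γ : SimpleGraph X) : wordProd Γ [] = 1 := rfl

theorem wordProd_cons {X : Type*} (Γ : SimpleGraph X) (a : X × Bool) (w : List (X × Bool)) :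
    wordProd Γ (a :: w) =
      (if a.2 then Raag.of Γ a.1 else (Raag.of Γ a.1)⁻¹) * wordProd Γ w := rfl

theorem wordProd_append {X : Type*} (Γ : SimpleGraph X) (w₁ w₂ : List (X × Bool)) :
    wordProd Γ (w₁ ++ w₂) = wordProd Γ w₁ * wordProd Γ w₂ := by
  simp [wordProd]

theorem Raag.of_commute {X : Type*} (Γ : SimpleGraph X) {a b : X} (h : ¬ Γ.Adj a b) :
    Commute (Raag.of Γ a) (Raag.of Γ b) := by
  by_cases hab : a = b
  · subst hab; exact Commute.refl _
  · have h1 : (PresentedGroup.mk (raagRels Γ)) (FreeGroup.of a * FreeGroup.of b *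
        (FreeGroup.of a)⁻¹ * (FreeGroup.of b)⁻¹) = 1 :=
      PresentedGroup.one_of_mem ⟨a, b, hab, h, rfl⟩
    simp only [map_mul, map_inv] at h1
    exact (mul_inv_eq_iff_eq_mul.1 (mul_inv_eq_one.1 h1))

/-- A contiguous subword of a reduced word is reduced. -/
theorem IsReducedWord.middle {X : Type*} {Γ : SimpleGraph X} {a b c : List (X × Bool)}
    (h : IsReducedWord Γ (a ++ b ++ c)) : IsReducedWord Γ b := by
  intro w' hw'
  have := h (a ++ w' ++ c) (by simp [wordProd_append, hw'])
  simp at this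
  omega

theorem raagNorm_wordProd_le {X : Type*} (Γ : SimpleGraph X) (w : List (X × Bool)) :
    raagNorm Γ (wordProd Γ w) ≤ w.length := by
  refine Nat.sInf_le ⟨_, ?_, rfl, by simp⟩
  intro x hx
  simp only [List.mem_map] at hx
  obtain ⟨a, -, rfl⟩ := hx
  split_ifs
  · exact Or.inl ⟨_, rfl⟩
  · exact Or.inr ⟨a.1, by simp⟩

theorem exists_word_of_list {X : Type*} (Γ : SimpleGraph X) (l : List (Raag Γ))
    (hl : ∀ x ∈ l, x ∈ Set.range (Raag.of Γ) ∨ x⁻¹ ∈ Set.range (Raag.of Γ)) :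
    ∃ w : List (X × Bool), wordProd Γ w = l.prod ∧ w.length = l.length := by
  induction l with
  | nil => exact ⟨[], rfl, rfl⟩
  | cons x l ih =>
    obtain ⟨w, hw, hlen⟩ := ih fun y hy => hl y (List.mem_cons_of_mem _ hy)
    rcases hl x List.mem_cons_self with ⟨v, hv⟩ | ⟨v, hv⟩
    · exact ⟨(v, true) :: w, by simp [wordProd_cons, hw, hv], by simp [hlen]⟩
    · exact ⟨(v, false) :: w, by simp [wordProd_cons, hw, hv], by simp [hlen]⟩

theorem exists_word {X : Type*} (Γ : SimpleGraph X) (g : Raag Γ) :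
    ∃ w : List (X × Bool), wordProd Γ w = g := by
  have hg : g ∈ Subgroup.closure (Set.range (Raag.of Γ)) := by
    rw [PresentedGroup.closure_range_of]; trivial
  obtain ⟨l, hl, rfl⟩ := exists_list_of_mem_closure hg
  obtain ⟨w, hw, -⟩ := exists_word_of_list Γ l hl
  exact ⟨w, hw⟩

theorem exists_shortest_word {X : Type*} (Γ : SimpleGraph X) (g : Raag Γ) :
    ∃ w : List (X × Bool), wordProd Γ w = g ∧ w.length = raagNorm Γ g ∧ IsReducedWord Γ w := by
  have hne : {n | ∃ l : List (Raag Γ), (∀ x ∈ l, x ∈ Set.range (Raag.of Γ) ∨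
      x⁻¹ ∈ Set.range (Raag.of Γ)) ∧ l.prod = g ∧ l.length = n}.Nonempty := by
    obtain ⟨w, rfl⟩ := exists_word Γ g
    refine ⟨_, _, ?_, rfl, rfl⟩
    intro x hx
    simp only [List.mem_map] at hx
    obtain ⟨a, -, rfl⟩ := hx
    split_ifs
    · exact Or.inl ⟨_, rfl⟩
    · exact Or.inr ⟨a.1, by simp⟩
  obtain ⟨l, hl, hlg, hlen⟩ := Nat.sInf_mem hne
  obtain ⟨w, hw, hwl⟩ := exists_word_of_list Γ l hl
  have hwn : w.length = raagNorm Γ g := by rw [hwl, hlen]; rfl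
  refine ⟨w, hw.trans hlg, hwn, ?_⟩
  intro w' hw'
  rw [hwn, ← hlg, ← hw, ← hw']
  exact raagNorm_wordProd_le Γ w'

/-! ### From a norm inequality to a quasi-isometric embedding -/

/-- The upper bound on the distortion is automatic for a finite generating set. -/
theorem exists_norm_le {X Y : Type*} [Fintype X] {Γ : SimpleGraph X} {Δ : SimpleGraph Y}
    (f : Raag Γ →* Raag Δ) : ∃ C : ℕ, 1 ≤ C ∧ ∀ g, raagNorm Δ (f g) ≤ C * raagNorm Γ g := by
  choose ω hω using fun a : X × Bool =>
    exists_word Δ (f (if a.2 then Raag.of Γ a.1 else (Raag.of Γ a.1)⁻¹))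
  have hC : ∀ a, (ω a).length ≤ 1 + ∑ a, (ω a).length := fun a =>
    (Finset.single_le_sum (f := fun a => (ω a).length) (fun _ _ => Nat.zero_le _)
      (Finset.mem_univ a)).trans (Nat.le_add_left _ _)
  refine ⟨1 + ∑ a, (ω a).length, by omega, fun g => ?_⟩
  obtain ⟨w, rfl, hw, -⟩ := exists_shortest_word Γ g
  rw [← hw]
  have key : ∀ w : List (X × Bool), wordProd Δ (w.flatMap ω) = f (wordProd Γ w) ∧
      (w.flatMap ω).length ≤ (1 + ∑ a, (ω a).length) * w.length := by
    intro w
    induction w with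
    | nil => simp [wordProd_nil]
    | cons a w ih =>
      refine ⟨?_, ?_⟩
      · rw [List.flatMap_cons, wordProd_append, ih.1, hω, wordProd_cons, map_mul]
      · rw [List.flatMap_cons, List.length_append, List.length_cons, mul_add, mul_one]
        have := hC a
        have := ih.2
        omega
  rw [← (key w).1]
  exact (raagNorm_wordProd_le _ _).trans (key w).2

theorem isQIEmbedding_of_norm_le {X Y : Type*} [Fintype X] {Γ : SimpleGraph X}
    {Δ : SimpleGraph Y} (f : Raag Γ →* Raag Δ) (hf : ∀ g, raagNorm Γ g ≤ raagNorm Δ (f g)) :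
    IsQIEmbedding f (raagDist Γ) (raagDist Δ) := by
  refine ⟨?_, ?_⟩
  · rw [injective_iff_map_eq_one]
    intro g hg
    have h1 : raagNorm Δ (f g) ≤ 0 := by
      rw [hg, ← wordProd_nil Δ]; exact raagNorm_wordProd_le Δ []
    obtain ⟨w, rfl, hw, -⟩ := exists_shortest_word Γ g
    have h2 := hf (wordProd Γ w)
    have h3 : w = [] := List.length_eq_zero_iff.1 (by omega)
    rw [h3, wordProd_nil]
  · obtain ⟨C, hC1, hC⟩ := exists_norm_le f
    have hC1' : (1 : ℝ) ≤ C := by exact_mod_cast hC1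
    refine ⟨C, hC1', fun x y => ?_⟩
    have e1 : raagDist Γ x y = (raagNorm Γ (y * x⁻¹) : ℝ) := rfl
    have e2 : raagDist Δ (f x) (f y) = (raagNorm Δ (f (y * x⁻¹)) : ℝ) := by
      rw [map_mul, map_inv]; rfl
    rw [e1, e2]
    have h1 : (raagNorm Γ (y * x⁻¹) : ℝ) ≤ raagNorm Δ (f (y * x⁻¹)) := by
      exact_mod_cast hf _
    have h2 : (raagNorm Δ (f (y * x⁻¹)) : ℝ) ≤ C * raagNorm Γ (y * x⁻¹) := by
      exact_mod_cast hC _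
    have h3 : (raagNorm Γ (y * x⁻¹) : ℝ) / C ≤ raagNorm Γ (y * x⁻¹) :=
      div_le_self (Nat.cast_nonneg _) hC1'
    exact ⟨by linarith, by linarith⟩

/-! ### Counting a letter by means of an HNN extension -/

/-- The subgroup of `G(X)` generated by the vertices other than `r` that commute with `r`. -/
def commSub {W : Type*} (X : SimpleGraph W) (r : W) : Subgroup (Raag X) :=
  Subgroup.closure {g | ∃ y, y ≠ r ∧ ¬ X.Adj r y ∧ Raag.of X y = g}

/-- The subgroup of `G(X)` generated by the vertices other than `r`. -/
def awaySub {W : Type*} (X : SimpleGraph W) (r : W) : Subgroup (Raag X) :=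
  Subgroup.closure {g | ∃ y, y ≠ r ∧ Raag.of X y = g}

theorem commSub_le_awaySub {W : Type*} (X : SimpleGraph W) (r : W) :
    commSub X r ≤ awaySub X r :=
  Subgroup.closure_mono fun _ ⟨y, h, _, e⟩ => ⟨y, h, e⟩

/-- The HNN extension of `G(X)` whose stable letter centralizes `commSub X r`. The base group is
all of `G(X)` rather than `G(X - r)`, which spares working with induced subgraphs. -/
abbrev StarHNN {W : Type*} (X : SimpleGraph W) (r : W) : Type _ :=
  HNNExtension (Raag X) (commSub X r) (commSub X r) (MulEquiv.refl _)

open Classical in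
/-- The homomorphism that sends the vertex `r` to the stable letter and fixes the others. -/
noncomputable def toStarHNN {W : Type*} (X : SimpleGraph W) (r : W) : Raag X →* StarHNN X r :=
  PresentedGroup.toGroup (f := fun y => if y = r then HNNExtension.t
    else HNNExtension.of (Raag.of X y)) (by
    rintro _ ⟨u, v, huv, hadj, rfl⟩
    have key : ∀ y, y ≠ r → ¬ X.Adj r y →
        Commute (HNNExtension.t : StarHNN X r) (HNNExtension.of (Raag.of X y)) := by
      intro y hy hry
      have := HNNExtension.t_mul_of (φ := MulEquiv.refl (commSub X r))
        ⟨Raag.of X y, Subgroup.subset_closure ⟨y, hy, hry, rfl⟩⟩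
      exact this
    have : Commute (if u = r then HNNExtension.t else HNNExtension.of (Raag.of X u) : StarHNN X r)
        (if v = r then HNNExtension.t else HNNExtension.of (Raag.of X v)) := by
      split_ifs with h1 h2 h2
      · exact Commute.refl _
      · subst h1; exact key v h2 hadj
      · subst h2; exact (key u h1 fun h => hadj h.symm).symm
      · exact (Raag.of_commute X hadj).map _
    simp only [map_mul, map_inv, FreeGroup.lift_apply_of]
    rw [this.eq]; group)

theorem toStarHNN_of_self {W : Type*} (X : SimpleGraph W) (r : W) :
    toStarHNN X r (Raag.of X r) = HNNExtension.t := by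
  simp [toStarHNN, PresentedGroup.toGroup.of]

theorem toStarHNN_of_ne {W : Type*} (X : SimpleGraph W) {r y : W} (h : y ≠ r) :
    toStarHNN X r (Raag.of X y) = HNNExtension.of (Raag.of X y) := by
  simp [toStarHNN, PresentedGroup.toGroup.of, h]

theorem toStarHNN_of_mem {W : Type*} (X : SimpleGraph W) {r : W} {g : Raag X}
    (hg : g ∈ awaySub X r) : toStarHNN X r g = HNNExtension.of g := by
  induction hg using Subgroup.closure_induction with
  | mem x hx => obtain ⟨y, hy, rfl⟩ := hx; exact toStarHNN_of_ne X hy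
  | one => simp
  | mul x y _ _ hx hy => simp [hx, hy]
  | inv x _ hx => simp [hx]

open HNNExtension in
theorem length_unitsSMul_le {G : Type*} [Group G] {A B : Subgroup G} (φ : A ≃* B)
    {d : NormalWord.TransversalPair G A B} (u : ℤˣ) (w : NormalWord d) :
    (NormalWord.unitsSMul φ u w).toList.length ≤ w.toList.length + 1 := by
  classical
  unfold NormalWord.unitsSMul
  split_ifs with h
  · cases w using NormalWord.consRecOn with
    | ofGroup g => simp [NormalWord.Cancels] at h
    | cons g u' w h1 h2 _ =>
      simp only [NormalWord.unitsSMulWithCancel, NormalWord.consRecOn_cons,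
        NormalWord.group_smul_toList, NormalWord.cons_toList, List.length_cons]
      omega
  · simp

open HNNExtension Classical in
/-- Britton's lemma, as a count: any word representing an element whose image is given by a
reduced word of the HNN extension has at least as many letters `r` as that word has stable
letters. -/
theorem length_le_countP {W : Type*} (X : SimpleGraph W) (r : W) (U : List (W × Bool))
    (R : NormalWord.ReducedWord (Raag X) (commSub X r) (commSub X r))
    (hR : R.prod (MulEquiv.refl _) = toStarHNN X r (wordProd X U)) :
    R.toList.length ≤ U.countP (fun a => a.1 = r) := by
  obtain ⟨d⟩ := NormalWord.TransversalPair.nonempty (Raag X) (commSub X r) (commSub X r)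
  have key : ∀ U : List (W × Bool), ((toStarHNN X r (wordProd X U)) •
      (NormalWord.empty : NormalWord d)).toList.length ≤ U.countP (fun a => a.1 = r) := by
    intro U
    induction U with
    | nil => simp [wordProd_nil]
    | cons a U ih =>
      obtain ⟨y, b⟩ := a
      rw [wordProd_cons, map_mul, mul_smul, List.countP_cons]
      by_cases hy : y = r
      · subst hy
        have : toStarHNN X y (if b then Raag.of X y else (Raag.of X y)⁻¹) =
            (HNNExtension.t : StarHNN X y) ^ (((if b then 1 else -1 : ℤˣ)) : ℤ) := by
          cases b <;> simp [toStarHNN_of_self]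
        simp only [this, NormalWord.t_pow_smul_eq_unitsSMul]
        refine (length_unitsSMul_le _ _ _).trans ?_
        simpa using ih
      · have : toStarHNN X r (if b then Raag.of X y else (Raag.of X y)⁻¹) =
            HNNExtension.of (if b then Raag.of X y else (Raag.of X y)⁻¹) := by
          cases b <;> simp [toStarHNN_of_ne X hy]
        simp only [this, NormalWord.of_smul_eq_smul, NormalWord.group_smul_toList]
        exact ih.trans (Nat.le_add_right _ _)
  have h := ReducedWord.map_fst_eq_and_of_prod_eq (φ := MulEquiv.refl (commSub X r)) (w₁ := R)
    (w₂ := ((toStarHNN X r (wordProd X U)) • (NormalWord.empty : NormalWord d)).toReducedWord)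
    (by rw [hR, NormalWord.prod_smul, NormalWord.prod_empty, mul_one])
  have h2 := congrArg List.length h.1
  simp only [List.length_map] at h2
  rw [h2]
  exact key U

theorem exists_word_of_mem_commSub {W : Type*} (X : SimpleGraph W) {r : W} {g : Raag X}
    (hg : g ∈ commSub X r) :
    ∃ U : List (W × Bool), wordProd X U = g ∧ ∀ a ∈ U, ¬ X.Adj r a.1 := by
  obtain ⟨l, hl, rfl⟩ := exists_list_of_mem_closure hg
  clear hg
  induction l with
  | nil => exact ⟨[], rfl, by simp⟩
  | cons x l ih =>
    obtain ⟨U, hU, hU'⟩ := ih fun y hy => hl y (List.mem_cons_of_mem _ hy)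
    rcases hl x List.mem_cons_self with ⟨v, -, hv, hx⟩ | ⟨v, -, hv, hx⟩
    · exact ⟨(v, true) :: U, by simp [wordProd_cons, hU, hx], by simpa [hv] using hU'⟩
    · exact ⟨(v, false) :: U, by simp [wordProd_cons, hU, hx], by simpa [hv] using hU'⟩

/-! ### The tree of simple paths -/

/-- The simple paths of `Γ`, as lists of vertices whose head is the current end of the path. The
empty list is included; it serves as the root of the tree of paths. -/
abbrev SPath {V : Type*} (Γ : SimpleGraph V) : Type _ :=
  {l : List V // l.Nodup ∧ l.IsChain Γ.Adj}

/-- The tree of simple paths of `Γ`: a path is joined to its one-vertex extensions. -/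
def pathTree {V : Type*} (Γ : SimpleGraph V) : SimpleGraph (SPath Γ) where
  Adj a b := (∃ v, a.1 = v :: b.1) ∨ ∃ v, b.1 = v :: a.1
  symm := ⟨fun _ _ h => h.symm⟩
  loopless := ⟨fun a h => by
    rcases h with ⟨v, h⟩ | ⟨v, h⟩ <;> simpa using congrArg List.length h⟩

theorem spath_injective {V : Type*} [Fintype V] (Γ : SimpleGraph V) : Function.Injective
    (fun (l : SPath Γ) (i : Fin (Fintype.card V)) => l.1[(i : ℕ)]?) := by
  intro a b h
  apply Subtype.ext
  apply List.ext_getElem?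
  intro i
  by_cases hi : i < Fintype.card V
  · exact congrFun h ⟨i, hi⟩
  · have ha := a.2.1.length_le_card
    have hb := b.2.1.length_le_card
    rw [List.getElem?_eq_none (by omega), List.getElem?_eq_none (by omega)]

instance {V : Type*} [Fintype V] (Γ : SimpleGraph V) : Finite (SPath Γ) :=
  Finite.of_injective _ (spath_injective Γ)

theorem card_spath_le {V : Type*} [Fintype V] (Γ : SimpleGraph V) :
    Nat.card (SPath Γ) ≤ (Fintype.card V + 1) ^ Fintype.card V := by
  classical
  refine (Nat.card_le_card_of_injective _ (spath_injective Γ)).trans ?_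
  simp

/-- The tail of a path. -/
def SPath.tail {V : Type*} {Γ : SimpleGraph V} (a : SPath Γ) : SPath Γ :=
  ⟨a.1.tail, a.2.1.tail, a.2.2.tail⟩

theorem pathTree_adj_tail {V : Type*} {Γ : SimpleGraph V} {a : SPath Γ} (h : a.1 ≠ []) :
    (pathTree Γ).Adj a a.tail := by
  refine Or.inl ⟨a.1.head h, ?_⟩
  simp [SPath.tail]

theorem pathTree_isTree {V : Type*} [Fintype V] (Γ : SimpleGraph V) : (pathTree Γ).IsTree := by
  classical
  have := Fintype.ofFinite (SPath Γ)
  let root : SPath Γ := ⟨[], by simp⟩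
  rw [SimpleGraph.isTree_iff_connected_and_card]
  constructor
  · have key : ∀ n (a : SPath Γ), a.1.length = n → (pathTree Γ).Reachable a root := by
      intro n
      induction n with
      | zero =>
        intro a ha
        have : a = root := Subtype.ext (List.length_eq_zero_iff.1 ha)
        rw [this]
      | succ n ih =>
        intro a ha
        have hne : a.1 ≠ [] := by rintro h; simp [h] at ha
        exact (pathTree_adj_tail hne).reachable.trans (ih _ (by simp [SPath.tail, ha]))
    have : Nonempty (SPath Γ) := ⟨root⟩
    exact ⟨fun a b => (key _ a rfl).trans (key _ b rfl).symm⟩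
  · -- the edges are in bijection with the nonempty paths
    let e : {a : SPath Γ // a ≠ root} → (pathTree Γ).edgeSet := fun a =>
      ⟨s(a.1, a.1.tail), pathTree_adj_tail fun h => a.2 (Subtype.ext h)⟩
    have he : Function.Bijective e := by
      constructor
      · rintro ⟨a, ha⟩ ⟨b, hb⟩ h
        have h' : s(a, a.tail) = s(b, b.tail) := congrArg Subtype.val h
        have hpa : a.1 ≠ [] := fun h => ha (Subtype.ext h)
        have hpb : b.1 ≠ [] := fun h => hb (Subtype.ext h)
        rcases Sym2.eq_iff.1 h' with ⟨h1, -⟩ | ⟨h1, h2⟩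
        · exact Subtype.ext h1
        · exfalso
          have l1 := congrArg (fun x : SPath Γ => x.1.length) h1
          have l2 := congrArg (fun x : SPath Γ => x.1.length) h2
          have := List.length_pos_iff.2 hpa
          simp only [SPath.tail, List.length_tail] at l1 l2
          omega
      · rintro ⟨x, hx⟩
        induction x using Sym2.ind with
        | _ a b =>
          have hab : (pathTree Γ).Adj a b := hx
          rcases hab with ⟨v, hv⟩ | ⟨v, hv⟩
          · refine ⟨⟨a, ?_⟩, ?_⟩
            · rintro rfl; simp [root] at hv
            · have : a.tail = b := Subtype.ext (by simp [SPath.tail, hv])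
              simp [e, this]
          · refine ⟨⟨b, ?_⟩, ?_⟩
            · rintro rfl; simp [root] at hv
            · have : b.tail = a := Subtype.ext (by simp [SPath.tail, hv])
              simp [e, this, Sym2.eq_swap]
    rw [← Nat.card_congr (Equiv.ofBijective e he), Nat.card_eq_fintype_card,
      Nat.card_eq_fintype_card, Fintype.card_subtype_compl]
    have : 0 < Fintype.card (SPath Γ) := Fintype.card_pos_iff.2 ⟨root⟩
    simp only [Fintype.card_subtype_eq]
    omega

/-! ### The homomorphism -/

/-- The lifts of `v`: the simple paths that end at `v`. -/
noncomputable def lifts {V : Type*} [Fintype V] (Γ : SimpleGraph V) (v : V) : Finset (SPath Γ) :=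
  (Set.toFinite {a : SPath Γ | a.1.head? = some v}).toFinset

theorem mem_lifts {V : Type*} [Fintype V] {Γ : SimpleGraph V} {v : V} {a : SPath Γ} :
    a ∈ lifts Γ v ↔ a.1.head? = some v := by
  simp [lifts]

theorem lifts_commute {V : Type*} [Fintype V] {Γ : SimpleGraph V} {u v : V} (h : ¬ Γ.Adj u v)
    {a b : SPath Γ} (ha : a ∈ lifts Γ u) (hb : b ∈ lifts Γ v) :
    Commute (Raag.of (pathTree Γ) a) (Raag.of (pathTree Γ) b) := by
  apply Raag.of_commute
  rw [mem_lifts, List.head?_eq_some_iff] at ha hb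
  obtain ⟨la, ha⟩ := ha
  obtain ⟨lb, hb⟩ := hb
  rintro (⟨w, hw⟩ | ⟨w, hw⟩)
  · have := a.2.2
    rw [hw, hb, List.isChain_cons_cons] at this
    rw [ha] at hw
    obtain ⟨rfl, -⟩ := List.cons.inj hw
    exact h this.1
  · have := b.2.2
    rw [hw, ha, List.isChain_cons_cons] at this
    rw [hb] at hw
    obtain ⟨rfl, -⟩ := List.cons.inj hw
    exact h this.1.symm

/-- The image of a vertex generator: the product of its lifts. -/
noncomputable def liftProd {V : Type*} [Fintype V] (Γ : SimpleGraph V) (v : V) :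
    Raag (pathTree Γ) :=
  (lifts Γ v).noncommProd (Raag.of (pathTree Γ))
    fun _ ha _ hb _ => lifts_commute (Γ.irrefl (v := v)) ha hb

/-- The homomorphism `G(Γ) → G(pathTree Γ)` sending a vertex to the product of its lifts. -/
noncomputable def pathHom {V : Type*} [Fintype V] (Γ : SimpleGraph V) :
    Raag Γ →* Raag (pathTree Γ) :=
  PresentedGroup.toGroup (f := liftProd Γ) (by
    rintro _ ⟨u, v, -, hadj, rfl⟩
    have : Commute (liftProd Γ u) (liftProd Γ v) :=
      Finset.noncommProd_commute _ _ _ _ fun b hb =>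
        (Finset.noncommProd_commute _ _ _ _ fun a ha =>
          (lifts_commute hadj ha hb).symm).symm
    simp only [map_mul, map_inv, FreeGroup.lift_apply_of]
    rw [this.eq]; group)

theorem pathHom_of {V : Type*} [Fintype V] (Γ : SimpleGraph V) (v : V) :
    pathHom Γ (Raag.of Γ v) = liftProd Γ v :=
  PresentedGroup.toGroup.of _

/-- Any lift `π` of `v` can be split off from the product of the lifts of `v`, on either side; the
remaining factor commutes with `π`, because no two lifts of `v` are adjacent. -/
theorem exists_liftProd_eq {V : Type*} [Fintype V] {Γ : SimpleGraph V} {v : V} {π : SPath Γ}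
    (hπ : π ∈ lifts Γ v) : ∃ L ∈ commSub (pathTree Γ) π,
      liftProd Γ v = Raag.of (pathTree Γ) π * L ∧ liftProd Γ v = L * Raag.of (pathTree Γ) π := by
  classical
  have hc : ∀ a ∈ lifts Γ v, ∀ b ∈ lifts Γ v, a ≠ b →
      Commute (Raag.of (pathTree Γ) a) (Raag.of (pathTree Γ) b) :=
    fun a ha b hb _ => lifts_commute (Γ.irrefl (v := v)) ha hb
  refine ⟨((lifts Γ v).erase π).noncommProd (Raag.of (pathTree Γ)) fun a ha b hb hab =>
    hc a (Finset.mem_of_mem_erase ha) b (Finset.mem_of_mem_erase hb) hab, ?_, ?_, ?_⟩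
  · apply Subgroup.noncommProd_mem
    intro a ha
    refine Subgroup.subset_closure ⟨a, Finset.ne_of_mem_erase ha, ?_, rfl⟩
    have ha' := mem_lifts.1 (Finset.mem_of_mem_erase ha)
    rw [mem_lifts] at hπ
    rw [List.head?_eq_some_iff] at ha' hπ
    obtain ⟨la, ha'⟩ := ha'
    obtain ⟨lπ, hπ⟩ := hπ
    rintro (⟨w, hw⟩ | ⟨w, hw⟩)
    · have := π.2.1
      rw [hw, ha'] at this
      rw [hπ] at hw
      obtain ⟨rfl, -⟩ := List.cons.inj hw
      simp at this
    · have := a.2.1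
      rw [hw, hπ] at this
      rw [ha'] at hw
      obtain ⟨rfl, -⟩ := List.cons.inj hw
      simp at this
  · exact (Finset.mul_noncommProd_erase _ hπ _ _).symm
  · exact (Finset.noncommProd_erase_mul _ hπ _ _).symm

theorem liftProd_mem_awaySub {V : Type*} [Fintype V] {Γ : SimpleGraph V} {v : V} {π : SPath Γ}
    (hπ : π ∉ lifts Γ v) : liftProd Γ v ∈ awaySub (pathTree Γ) π := by
  apply Subgroup.noncommProd_mem
  intro a ha
  exact Subgroup.subset_closure ⟨a, fun h => hπ (h ▸ ha), rfl⟩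

/-! ### No cancellation -/

open HNNExtension Classical in
/-- The syllable decomposition of a word `w` with respect to `v` maps to a reduced word of the HNN
extension at `π`, provided that no subword `v^{±1} u v^{∓1}` of `w` is a pinch. -/
theorem exists_reducedWord {V : Type*} [Fintype V] {Γ : SimpleGraph V} {v : V} {π : SPath Γ}
    (hπ : π ∈ lifts Γ v) (w : List (V × Bool))
    (hw : ∀ (u x y : List (V × Bool)) (b : Bool), w = x ++ ((v, b) :: (u ++ [(v, !b)])) ++ y →
      (∀ a ∈ u, a.1 ≠ v) → pathHom Γ (wordProd Γ u) ∉ commSub (pathTree Γ) π) :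
    ∃ R : NormalWord.ReducedWord (Raag (pathTree Γ)) (commSub (pathTree Γ) π)
        (commSub (pathTree Γ) π),
      R.prod (MulEquiv.refl _) = toStarHNN (pathTree Γ) π (pathHom Γ (wordProd Γ w)) ∧
      R.toList.length = w.countP (fun a => a.1 = v) ∧
      ∃ u rest, w = u ++ rest ∧ R.head = pathHom Γ (wordProd Γ u) ∧ (∀ a ∈ u, a.1 ≠ v) ∧
        ∀ z ∈ R.toList.head?, ∃ b rest', rest = (v, b) :: rest' ∧
          z.1 = if b then 1 else -1 := by
  induction w with
  | nil => exact ⟨NormalWord.ReducedWord.empty _ _ _, by simp [NormalWord.ReducedWord.prod, wordProd_nil],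
      rfl, [], [], rfl, by simp [wordProd_nil], by simp, by simp⟩
  | cons a w ih =>
    obtain ⟨R, hR, hlen, u, rest, hur, hhead, hu, hz⟩ := ih fun u x y b h =>
      hw u (a :: x) y b (by simp [h])
    obtain ⟨x, b⟩ := a
    by_cases hx : x = v
    · subst hx
      obtain ⟨L, hL, hL1, hL2⟩ := exists_liftProd_eq hπ
      set ε : ℤˣ := if b then 1 else -1 with hε
      have hLε : L ^ (ε : ℤ) ∈ commSub (pathTree Γ) π := Subgroup.zpow_mem _ hL _
      refine ⟨⟨1, (ε, L ^ (ε : ℤ) * R.head) :: R.toList, ?_⟩, ?_, ?_, [], (x, b) :: w, rfl, ?_,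
        by simp, ?_⟩
      · rw [List.isChain_cons]
        refine ⟨fun z hzR hmem => ?_, R.chain⟩
        have hmem' : R.head ∈ commSub (pathTree Γ) π := by
          have : L ^ (ε : ℤ) * R.head ∈ commSub (pathTree Γ) π := by
            rcases Int.units_eq_one_or ε with h | h <;> rw [h] at hmem ⊢ <;> exact hmem
          exact (Subgroup.mul_mem_cancel_left _ hLε).1 this
        obtain ⟨b', rest', hrest, hzb⟩ := hz z hzR
        by_contra hne
        have hbb : b' = !b := by
          by_contra hb
          have hb' : b' = b := by cases b <;> cases b' <;> first | rfl | exact absurd rfl hb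
          exact hne (show ε = z.1 by rw [hzb, hε, hb'])
        refine hw u [] rest' b ?_ hu (hhead ▸ hmem')
        rw [hur, hrest, hbb]; simp
      · have h1 : toStarHNN (pathTree Γ) π (pathHom Γ
            (if b then Raag.of Γ x else (Raag.of Γ x)⁻¹)) =
              t ^ (ε : ℤ) * of (L ^ (ε : ℤ)) := by
          have hLof := toStarHNN_of_mem (pathTree Γ) (commSub_le_awaySub _ _ hL)
          cases b
          · simp [hε, pathHom_of, hL2, toStarHNN_of_self, hLof]
          · simp [hε, pathHom_of, hL1, toStarHNN_of_self, hLof]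
        rw [wordProd_cons, map_mul, map_mul, ← hR, h1]
        simp [NormalWord.ReducedWord.prod, mul_assoc]
      · simp [hlen]
      · simp [wordProd_nil]
      · rintro z hz
        simp only [List.head?_cons, Option.mem_def, Option.some.injEq] at hz
        exact ⟨b, w, rfl, by rw [← hz]⟩
    · have hmem : pathHom Γ (if b then Raag.of Γ x else (Raag.of Γ x)⁻¹) ∈
          awaySub (pathTree Γ) π := by
        have : liftProd Γ x ∈ awaySub (pathTree Γ) π := by
          apply liftProd_mem_awaySub
          rw [mem_lifts] at hπ ⊢
          rw [hπ]
          simpa using fun h => hx h.symm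
        cases b
        · simpa [pathHom_of] using this
        · simpa [pathHom_of] using this
      refine ⟨⟨pathHom Γ (if b then Raag.of Γ x else (Raag.of Γ x)⁻¹) * R.head, R.toList, R.chain⟩,
        ?_, ?_, (x, b) :: u, rest, by simp [hur], ?_, ?_, hz⟩
      · rw [wordProd_cons, map_mul, map_mul, ← hR, toStarHNN_of_mem _ hmem]
        simp [NormalWord.ReducedWord.prod, mul_assoc]
      · simp [hlen, hx]
      · rw [wordProd_cons, map_mul, hhead]
      · simpa [hx] using hu

/-- A reduced word `v^{±1} u v^{∓1}` has a letter adjacent to `v` in `u`. -/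
theorem exists_adj_of_reduced {V : Type*} {Γ : SimpleGraph V} {v : V} {b : Bool}
    {u : List (V × Bool)} (h : IsReducedWord Γ ((v, b) :: (u ++ [(v, !b)]))) :
    ∃ a ∈ u, Γ.Adj v a.1 := by
  by_contra! hcon
  have hcomm : Commute (Raag.of Γ v) (wordProd Γ u) := by
    unfold wordProd
    apply Commute.list_prod_right
    intro x hx
    simp only [List.mem_map] at hx
    obtain ⟨a, ha, rfl⟩ := hx
    have := Raag.of_commute Γ (hcon a ha)
    split_ifs
    · exact this
    · exact this.inv_right
  have := h u (by
    rw [wordProd_cons, wordProd_append, wordProd_cons, wordProd_nil, mul_one]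
    cases b
    · simp [← hcomm.eq]
    · simp [← mul_assoc, hcomm.eq])
  simp at this

open Classical in
/-- The lift `π` of its end `v` survives in the image of a reduced word `w` that avoids the other
vertices of `π`. The induction is on the number of vertices outside `π`: a pinch `v^{±1} u v^{∓1}`
at `π` would eliminate the lift `t :: π` of a letter `t` of `u` adjacent to `v`. -/
theorem countP_le_countP {V : Type*} [Fintype V] {Γ : SimpleGraph V} (n : ℕ) :
    ∀ (π : SPath Γ) (v : V) (l : List V), π.1 = v :: l → Fintype.card V < π.1.length + n →
    ∀ w, IsReducedWord Γ w → (∀ a ∈ w, a.1 ∉ l) →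
    ∀ U, wordProd (pathTree Γ) U = pathHom Γ (wordProd Γ w) →
      w.countP (fun a => a.1 = v) ≤ U.countP (fun a => a.1 = π) := by
  induction n with
  | zero =>
    intro π v l hπ hcard
    have := π.2.1.length_le_card
    omega
  | succ n ih =>
    intro π v l hπ hcard w hw hwl U hU
    have hmem : π ∈ lifts Γ v := by rw [mem_lifts, hπ]; rfl
    obtain ⟨R, hR, hlen, -⟩ := exists_reducedWord hmem w (by
      rintro u x y b rfl hu hcomm
      have hred := hw.middle
      obtain ⟨⟨t, c⟩, htu, hadj⟩ := exists_adj_of_reduced hred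
      have htv : t ≠ v := hu _ htu
      have htl : t ∉ l := hwl (t, c) (by simp [htu])
      have hnd : (t :: π.1).Nodup ∧ (t :: π.1).IsChain Γ.Adj := by
        refine ⟨List.nodup_cons.2 ⟨?_, π.2.1⟩, ?_⟩
        · rw [hπ]; simp [htv, htl]
        · have := π.2.2
          rw [hπ] at this ⊢
          exact List.isChain_cons_cons.2 ⟨hadj.symm, this⟩
      obtain ⟨U', hU', hUadj⟩ := exists_word_of_mem_commSub _ hcomm
      have hured : IsReducedWord Γ u := by
        have : (v, b) :: (u ++ [(v, !b)]) = [(v, b)] ++ u ++ [(v, !b)] := by simp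
        rw [this] at hred
        exact hred.middle
      have hle := ih ⟨t :: π.1, hnd⟩ t π.1 rfl (by simp; omega) u hured (by
        intro a ha
        rw [hπ, List.mem_cons, not_or]
        exact ⟨hu a ha, hwl a (by simp [ha])⟩) U' hU'
      have hpos : 0 < u.countP (fun a => a.1 = t) :=
        List.countP_pos_iff.2 ⟨(t, c), htu, by simp⟩
      obtain ⟨a, ha, hat⟩ := List.countP_pos_iff.1 (hpos.trans_le hle)
      refine hUadj a ha ?_
      rw [of_decide_eq_true hat]
      exact Or.inr ⟨t, rfl⟩)
    rw [← hlen]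
    convert length_le_countP _ π U R (by rw [hR, hU])

/-- By `countP_le_countP`, the one-vertex path at `v` occurs in any word for the image at least as
often as `v` occurs in a reduced word; summing over `v` shows that norms do not decrease. -/
theorem raagNorm_le_pathHom {V : Type*} [Fintype V] (Γ : SimpleGraph V) (g : Raag Γ) :
    raagNorm Γ g ≤ raagNorm (pathTree Γ) (pathHom Γ g) := by
  classical
  obtain ⟨w, rfl, hlen, hw⟩ := exists_shortest_word Γ g
  obtain ⟨U, hU, hUlen, -⟩ := exists_shortest_word (pathTree Γ) (pathHom Γ (wordProd Γ w))
  rw [← hlen, ← hUlen]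
  have hcount : ∀ v : V, w.countP (fun a => a.1 = v) ≤
      U.countP (fun a => a.1 = (⟨[v], by simp⟩ : SPath Γ)) := fun v =>
    countP_le_countP (Fintype.card V) ⟨[v], by simp⟩ v [] rfl (by simp) w hw (by simp) U hU
  have h1 : ∀ w : List (V × Bool), w.length = ∑ v, w.countP (fun a => a.1 = v) := by
    intro w
    induction w with
    | nil => simp
    | cons a w ih => simp [List.countP_cons, Finset.sum_add_distrib, ← ih]
  have h2 : ∀ U : List (SPath Γ × Bool),
      ∑ v, U.countP (fun a => a.1 = (⟨[v], by simp⟩ : SPath Γ)) ≤ U.length := by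
    intro U
    induction U with
    | nil => simp
    | cons a U ih =>
      simp only [List.countP_cons, Finset.sum_add_distrib, List.length_cons]
      refine Nat.add_le_add ih ?_
      simp only [decide_eq_true_eq]
      rw [Finset.sum_boole]
      simp only [Nat.cast_id]
      rw [Finset.card_le_one]
      intro x hx y hy
      simp only [Finset.mem_filter, Finset.mem_univ, true_and] at hx hy
      have := congrArg Subtype.val (hx.symm.trans hy)
      simpa using this
  calc w.length = ∑ v, w.countP (fun a => a.1 = v) := h1 w
    _ ≤ ∑ v, U.countP (fun a => a.1 = (⟨[v], by simp⟩ : SPath Γ)) :=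
      Finset.sum_le_sum fun v _ => hcount v
    _ ≤ U.length := h2 U

/-! ### Relabelling and the size of the tree -/

/-- The homomorphism induced by a graph isomorphism. -/
def raagMap {X Y : Type*} {Γ : SimpleGraph X} {Δ : SimpleGraph Y} (e : Γ ≃g Δ) :
    Raag Γ →* Raag Δ :=
  PresentedGroup.toGroup (f := fun x => Raag.of Δ (e x)) (by
    rintro _ ⟨u, v, -, hadj, rfl⟩
    have : Commute (Raag.of Δ (e u)) (Raag.of Δ (e v)) :=
      Raag.of_commute Δ (by rwa [e.map_adj_iff])
    simp only [map_mul, map_inv, FreeGroup.lift_apply_of]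
    rw [this.eq]; group)

theorem raagMap_wordProd {X Y : Type*} {Γ : SimpleGraph X} {Δ : SimpleGraph Y} (e : Γ ≃g Δ)
    (w : List (X × Bool)) :
    raagMap e (wordProd Γ w) = wordProd Δ (w.map fun a => (e a.1, a.2)) := by
  have hof : ∀ x, raagMap e (Raag.of Γ x) = Raag.of Δ (e x) := fun x => PresentedGroup.toGroup.of _
  induction w with
  | nil => simp [wordProd_nil]
  | cons a w ih =>
    obtain ⟨x, b⟩ := a
    rw [wordProd_cons, map_mul, ih, List.map_cons, wordProd_cons]
    cases b <;> simp [hof]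

theorem raagNorm_raagMap {X Y : Type*} {Γ : SimpleGraph X} {Δ : SimpleGraph Y} (e : Γ ≃g Δ)
    (g : Raag Γ) : raagNorm Γ g ≤ raagNorm Δ (raagMap e g) := by
  obtain ⟨U, hU, hlen, -⟩ := exists_shortest_word Δ (raagMap e g)
  obtain ⟨w, rfl⟩ := exists_word Γ g
  have h1 : wordProd Γ (U.map fun a => (e.symm a.1, a.2)) = wordProd Γ w := by
    rw [← raagMap_wordProd e.symm, hU, raagMap_wordProd e, raagMap_wordProd e.symm]
    simp [Function.comp_def]
  rw [← hlen, ← h1]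
  simpa using raagNorm_wordProd_le Γ (U.map fun a => (e.symm a.1, a.2))

/-- A norm-nondecreasing homomorphism to the group of a finite tree, with the vertices of the tree
relabelled by an initial segment of `ℕ`. -/
theorem exists_of_norm_le {V W : Type*} [Fintype V] [Finite W] {Γ : SimpleGraph V}
    {T : SimpleGraph W} (hT : T.IsTree) (f : Raag Γ →* Raag T)
    (hf : ∀ g, raagNorm Γ g ≤ raagNorm T (f g)) {N : ℕ} (hN : Nat.card W ≤ N) :
    ∃ (n : ℕ) (T : SimpleGraph (Fin n)) (f : Raag Γ →* Raag T),
      n ≤ N ∧ T.IsTree ∧ IsQIEmbedding f (raagDist Γ) (raagDist T) := by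
  let e : W ≃ Fin (Nat.card W) := Finite.equivFin W
  let i : T ≃g T.map e.toEmbedding := SimpleGraph.Iso.map e T
  refine ⟨Nat.card W, T.map e.toEmbedding, (raagMap i).comp f, hN, i.isTree_iff.1 hT,
    isQIEmbedding_of_norm_le _ fun g => (hf g).trans (raagNorm_raagMap i (f g))⟩

theorem isTree_of_card_le_two {V : Type*} [Fintype V] {Γ : SimpleGraph V} (hΓ : Γ.Connected)
    (h : Fintype.card V ≤ 2) : Γ.IsTree := by
  refine ⟨hΓ, fun v c hc => ?_⟩
  have h1 := hc.three_le_length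
  have h2 := hc.support_nodup.length_le_card
  simp at h2
  omega

theorem pow_card_bound {m : ℕ} (hm : 3 ≤ m) : (m + 1) ^ m ≤ 2 ^ 2 ^ ((m - 1) ^ 2) := by
  have h1 : m * m ≤ 2 ^ (m + 1) := by
    induction m, hm using Nat.le_induction with
    | base => norm_num
    | succ k hk ih => rw [pow_succ]; nlinarith
  have h2 : m + 1 ≤ (m - 1) ^ 2 := by
    obtain ⟨k, rfl⟩ := Nat.exists_eq_add_of_le hm
    have : 3 + k - 1 = k + 2 := by omega
    rw [this]; nlinarith
  calc (m + 1) ^ m ≤ (2 ^ m) ^ m := Nat.pow_le_pow_left Nat.lt_two_pow_self _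
    _ = 2 ^ (m * m) := (pow_mul _ _ _).symm
    _ ≤ 2 ^ 2 ^ ((m - 1) ^ 2) := Nat.pow_le_pow_right (by norm_num)
      (h1.trans (Nat.pow_le_pow_right (by norm_num) h2))

/-- For every finite connected simple graph `Γ` with `m` vertices there exist a
finite tree `T` with `|V(T)| ≤ 2^(2^((m−1)²))` and a quasi-isometric group embedding of `G(Γ)`
into `G(T)` with respect to the word metrics. -/
theorem raag_embeds_in_raag_of_tree_card_bound {V : Type} [Fintype V] [DecidableEq V]
    (Γ : SimpleGraph V) (hΓ : Γ.Connected) :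
    ∃ (n : ℕ) (T : SimpleGraph (Fin n)) (f : Raag Γ →* Raag T),
      n ≤ 2 ^ 2 ^ ((Fintype.card V - 1) ^ 2) ∧
      T.IsTree ∧ IsQIEmbedding f (raagDist Γ) (raagDist T) := by
  rcases Nat.lt_or_ge 2 (Fintype.card V) with hm | hm
  · exact exists_of_norm_le (pathTree_isTree Γ) (pathHom Γ) (raagNorm_le_pathHom Γ)
      ((card_spath_le Γ).trans (pow_card_bound hm))
  · -- for two vertices the tree of paths has five vertices, one more than the bound allows, but `Γ`
    -- is itself a tree
    have hpos : 0 < Fintype.card V := Fintype.card_pos_iff.2 hΓ.nonempty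
    refine exists_of_norm_le (isTree_of_card_le_two hΓ hm) (MonoidHom.id _) (fun _ => le_rfl) ?_
    rw [Nat.card_eq_fintype_card]
    interval_cases Fintype.card V <;> norm_num
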